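/- Let N ≥ 2 and n ≥ N be integers and let L ≥ 0 be a real number with 2L a nonnegative integer. Then for all ζ, η ∈ ℂ the two-point correlation function of the symplectic induced spherical ensemble satisfies R_{N,2}(ζ,η) = (conj(ζ) − ζ)(conj(η) − η)/((1+|ζ|²)(1+|η|²))^{2n+2L+2} · ( κ̂_N(ζ, conj(ζ))·κ̂_N(η, conj(η)) − |κ̂_N(ζ,η)|² + |κ̂_N(ζ, conj(η))|² ). -/

import Mathlib

open MeasureTheory Filter Finset

noncomputable section

namespace SI

/-- The weight `w(ζ) = |ζ|^{4L}(1+|ζ|²)^{-2(n+L+1)}`. -/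
def wfun (n L : ℝ) (ζ : ℂ) : ℝ :=
  ‖ζ‖ ^ (4*L) * (1 + ‖ζ‖ ^ 2) ^ (-(2*(n+L+1)))

/-- The (unnormalised) joint eigenvalue density of the symplectic induced
spherical ensemble. -/
def jointDen (N : ℕ) (n L : ℝ) (ζs : Fin N → ℂ) : ℝ :=
  (∏ j : Fin N, ∏ k ∈ Finset.Ioi j,
     ‖ζs j - ζs k‖ ^ 2 * ‖ζs j - (starRingEnd ℂ) (ζs k)‖ ^ 2) *
  ∏ j : Fin N, (‖ζs j - (starRingEnd ℂ) (ζs j)‖ ^ 2 * wfun n L (ζs j))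

/-- The normalisation constant `Z_N` (the factor `π⁻ᴺ` accounts for `dA = d²ζ/π`). -/
def ZN (N : ℕ) (n L : ℝ) : ℝ :=
  (Real.pi)⁻¹ ^ N * ∫ ζs : Fin N → ℂ, jointDen N n L ζs

/-- The one-point correlation function `R_{N,1}`. -/
def R1 (N : ℕ) (n L : ℝ) (ζ : ℂ) : ℝ :=
  N * (ZN N n L)⁻¹ * (Real.pi)⁻¹ ^ (N-1) *
    ∫ ζs : Fin (N-1) → ℂ, jointDen (N-1+1) n L (Fin.cons ζ ζs)

/-- The two-point correlation function `R_{N,2}`. -/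
def R2 (N : ℕ) (n L : ℝ) (ζ η : ℂ) : ℝ :=
  (N * (N-1) : ℝ) * (ZN N n L)⁻¹ * (Real.pi)⁻¹ ^ (N-2) *
    ∫ ζs : Fin (N-2) → ℂ, jointDen (N-2+1+1) n L (Fin.cons ζ (Fin.cons η ζs))

/-- The kernel `G_N(ζ,η)` built from the skew-orthogonal polynomials of the
symplectic induced spherical ensemble (all powers are principal-branch `cpow`s,
which agree with the integer powers whenever `2L` is a nonnegative integer). -/
def GK (N : ℕ) (n L : ℝ) (ζ η : ℂ) : ℂ :=
  ((Real.pi : ℂ) * Complex.Gamma ((2*n+2*L+2 : ℝ) : ℂ) / (2:ℂ) ^ ((2*n+2*L+1 : ℝ) : ℂ)) *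
  ∑ k ∈ range N, ∑ l ∈ range (k+1),
    ζ ^ ((2*k+2*L+1 : ℝ) : ℂ) * η ^ ((2*l+2*L : ℝ) : ℂ) /
      (Complex.Gamma ((k+L+3/2 : ℝ) : ℂ) * Complex.Gamma ((n-k : ℝ) : ℂ) *
       Complex.Gamma ((n-l+1/2 : ℝ) : ℂ) * Complex.Gamma ((l+L+1 : ℝ) : ℂ))

/-- The skew-symmetric kernel `κ̂_N(ζ,η) = G_N(ζ,η) - G_N(η,ζ)`. -/
def KK (N : ℕ) (n L : ℝ) (ζ η : ℂ) : ℂ := GK N n L ζ η - GK N n L η ζ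

section Alg

variable {W : Type} [AddCommGroup W] [Module ℂ W]


/-- contraction -/
def ctr (d : Module.Dual ℂ W) : ExteriorAlgebra ℂ W →ₗ[ℂ] ExteriorAlgebra ℂ W :=
  CliffordAlgebra.contractLeft (Q := (0 : QuadraticForm ℂ W)) d

theorem ctr_mul (d : Module.Dual ℂ W) (a : W) (b : ExteriorAlgebra ℂ W) :
    ctr d (ExteriorAlgebra.ι ℂ a * b) = d a • b - ExteriorAlgebra.ι ℂ a * ctr d b :=
  CliffordAlgebra.contractLeft_ι_mul (Q := (0 : QuadraticForm ℂ W)) d a b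

theorem ctr_one (d : Module.Dual ℂ W) : ctr d 1 = 0 :=
  CliffordAlgebra.contractLeft_one (Q := (0 : QuadraticForm ℂ W)) d

theorem swp (x y : W) : ExteriorAlgebra.ι ℂ x * ExteriorAlgebra.ι ℂ y
    = - (ExteriorAlgebra.ι ℂ y * ExteriorAlgebra.ι ℂ x) :=
  eq_neg_of_add_eq_zero_left (ExteriorAlgebra.ι_add_mul_swap x y)

variable (Ω : ExteriorAlgebra ℂ W)

theorem ctr_pow (hc : ∀ x, Ω * ExteriorAlgebra.ι ℂ x = ExteriorAlgebra.ι ℂ x * Ω)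
    (d : Module.Dual ℂ W) (y : W)
    (hd : ∀ c, ctr d (Ω * c) = - (ExteriorAlgebra.ι ℂ y * c) + Ω * ctr d c) (m : ℕ) :
    ctr d (Ω ^ (m+1)) = - ((m+1 : ℂ) • (ExteriorAlgebra.ι ℂ y * Ω ^ m)) := by
  induction m with
  | zero => have := hd 1; simp [ctr_one] at this; simp [this]
  | succ m ih =>
    rw [pow_succ' Ω (m+1), hd, ih, mul_neg, mul_smul_comm, ← mul_assoc, hc, mul_assoc, ← pow_succ']
    push_cast
    module

theorem pf2 (hc : ∀ x, Ω * ExteriorAlgebra.ι ℂ x = ExteriorAlgebra.ι ℂ x * Ω)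
    (κ : W → Module.Dual ℂ W)
    (hd : ∀ y c, ctr (κ y) (Ω * c) = - (ExteriorAlgebra.ι ℂ y * c) + Ω * ctr (κ y) c) (m : ℕ)
    (h1 : ∀ x, ExteriorAlgebra.ι ℂ x * Ω ^ (m+1) = 0) (x y : W) :
    (m+1 : ℂ) • (ExteriorAlgebra.ι ℂ x * (ExteriorAlgebra.ι ℂ y * Ω ^ m))
      = - (κ y x) • Ω ^ (m+1) := by
  have := congrArg (ctr (κ y)) (h1 x)
  rw [ctr_mul, ctr_pow Ω hc _ y (hd y), map_zero, mul_neg, sub_neg_eq_add, mul_smul_comm] at this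
  rw [neg_smul]
  exact eq_neg_of_add_eq_zero_right this

theorem pf4 (hc : ∀ x, Ω * ExteriorAlgebra.ι ℂ x = ExteriorAlgebra.ι ℂ x * Ω)
    (κ : W → Module.Dual ℂ W)
    (hd : ∀ y c, ctr (κ y) (Ω * c) = - (ExteriorAlgebra.ι ℂ y * c) + Ω * ctr (κ y) c) (m : ℕ)
    (h1 : ∀ x, ExteriorAlgebra.ι ℂ x * Ω ^ (m+2) = 0)
    (h3 : ∀ x y z, ExteriorAlgebra.ι ℂ x * (ExteriorAlgebra.ι ℂ y *
      (ExteriorAlgebra.ι ℂ z * Ω ^ (m+1))) = 0) (x y z t : W) :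
    ((m+2 : ℂ) * (m+1)) • (ExteriorAlgebra.ι ℂ x * (ExteriorAlgebra.ι ℂ y *
      (ExteriorAlgebra.ι ℂ z * (ExteriorAlgebra.ι ℂ t * Ω ^ m))))
      = (κ y x * κ t z - κ z x * κ t y + κ t x * κ z y) • Ω ^ (m+2) := by
  have h := congrArg (ctr (κ t)) (h3 x y z)
  have P := fun x y => pf2 Ω hc κ hd (m+1) h1 x y
  rw [ctr_mul, ctr_mul, ctr_mul, ctr_pow Ω hc _ t (hd t), map_zero] at h
  simp only [mul_sub, mul_neg, mul_smul_comm, sub_neg_eq_add] at h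
  have h' : (m+1 : ℂ) • (ExteriorAlgebra.ι ℂ x * (ExteriorAlgebra.ι ℂ y *
      (ExteriorAlgebra.ι ℂ z * (ExteriorAlgebra.ι ℂ t * Ω ^ m))))
      = - ((κ t) x • (ExteriorAlgebra.ι ℂ y * (ExteriorAlgebra.ι ℂ z * Ω ^ (m + 1))))
       + (κ t) y • (ExteriorAlgebra.ι ℂ x * (ExteriorAlgebra.ι ℂ z * Ω ^ (m + 1)))
       - (κ t) z • (ExteriorAlgebra.ι ℂ x * (ExteriorAlgebra.ι ℂ y * Ω ^ (m + 1))) := by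
    rw [← sub_eq_zero, ← h]; simp only [smul_add, smul_sub, mul_sub, mul_add, mul_smul_comm]
    module
  have Q : ∀ x y, (m+2 : ℂ) • (ExteriorAlgebra.ι ℂ x * (ExteriorAlgebra.ι ℂ y * Ω ^ (m+1)))
      = - (κ y x) • Ω ^ (m+2) := by
    intro x y
    have := P x y
    push_cast at this
    rw [← this]; congr 1; ring
  rw [mul_smul, h', smul_sub, smul_add, smul_neg]
  rw [smul_comm _ (κ t x), smul_comm _ (κ t y), smul_comm _ (κ t z), Q, Q, Q]
  module

theorem deg_zero [FiniteDimensional ℂ W] (n : ℕ) (hn : Module.finrank ℂ W < n)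
    (a : ExteriorAlgebra ℂ W) (ha : a ∈ LinearMap.range (ExteriorAlgebra.ι ℂ (M := W)) ^ n) :
    a = 0 := by
  have h2 := ExteriorAlgebra.ιMulti_span_fixedDegree ℂ (M := W) n
  have : a ∈ Submodule.span ℂ (Set.range (ExteriorAlgebra.ιMulti ℂ n (M := W))) := by
    rw [h2]; exact ha
  have h0 : Set.range (ExteriorAlgebra.ιMulti ℂ n (M := W)) ⊆ {0} := by
    rintro _ ⟨v, rfl⟩
    refine AlternatingMap.map_linearDependent _ _ ?_
    intro hl
    have := hl.fintype_card_le_finrank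
    simp at this; omega
  have h3 := Submodule.span_mono (R := ℂ) h0 this
  simpa using h3

variable {I : Type} [Fintype I] (e : I → W) (A : I → I → ℂ)

/-- Omega -/
def Om : ExteriorAlgebra ℂ W :=
  ∑ i, ∑ j, A i j • (ExteriorAlgebra.ι ℂ (e i) * ExteriorAlgebra.ι ℂ (e j))

theorem Om_comm (x : W) : Om e A * ExteriorAlgebra.ι ℂ x = ExteriorAlgebra.ι ℂ x * Om e A := by
  simp only [Om, sum_mul, mul_sum]
  refine sum_congr rfl fun i _ => sum_congr rfl fun j _ => ?_
  rw [smul_mul_assoc, mul_smul_comm, mul_assoc, swp (e j) x, mul_neg, ← mul_assoc, swp (e i) x,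
    neg_mul, neg_neg, mul_assoc]

theorem Om_ctr (hA : ∀ i j, A i j = - A j i) (d : Module.Dual ℂ W) (y : W)
    (hy : (2:ℂ) • ∑ j, (∑ i, A i j * d (e i)) • e j = - y) (c : ExteriorAlgebra ℂ W) :
    ctr d (Om e A * c) = - (ExteriorAlgebra.ι ℂ y * c) + Om e A * ctr d c := by
  have h1 : ctr d (Om e A * c) = ∑ i, ∑ j, A i j • (d (e i) • (ExteriorAlgebra.ι ℂ (e j) * c)
      - d (e j) • (ExteriorAlgebra.ι ℂ (e i) * c)) + Om e A * ctr d c := by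
    simp only [Om, sum_mul, map_sum, smul_mul_assoc, map_smul, mul_assoc, ctr_mul]
    rw [← sum_add_distrib]
    refine sum_congr rfl fun i _ => ?_
    rw [← sum_add_distrib]
    refine sum_congr rfl fun j _ => ?_
    rw [mul_sub, mul_smul_comm]
    module
  rw [h1]; congr 1
  have h2 : - y = ∑ i, ∑ j, A i j • (d (e i) • e j - d (e j) • e i) := by
    simp only [smul_sub, sum_sub_distrib]
    have : ∑ i, ∑ j, A i j • d (e j) • e i = - ∑ i, ∑ j, A i j • d (e i) • e j := by
      rw [sum_comm, ← sum_neg_distrib]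
      refine sum_congr rfl fun i _ => ?_
      rw [← sum_neg_distrib]
      refine sum_congr rfl fun j _ => ?_
      rw [hA]; module
    rw [this, ← hy, sub_neg_eq_add, ← two_smul ℂ, sum_comm]
    congr 1
    refine sum_congr rfl fun i _ => ?_
    rw [sum_smul]
    refine sum_congr rfl fun j _ => ?_
    rw [mul_smul]
  have h3 := congrArg (fun z => ExteriorAlgebra.ι ℂ z * c) h2
  simp only [map_neg, neg_mul, map_sum, map_smul, map_sub, sum_mul, smul_mul_assoc, sub_mul] at h3
  rw [h3]

theorem Om_mem (m : ℕ) : Om e A ^ m ∈ LinearMap.range (ExteriorAlgebra.ι ℂ (M := W)) ^ (2*m) := by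
  rw [pow_mul]
  refine Submodule.pow_mem_pow _ ?_ m
  refine Submodule.sum_mem _ fun i _ => Submodule.sum_mem _ fun j _ => Submodule.smul_mem _ _ ?_
  rw [pow_two]
  exact Submodule.mul_mem_mul ⟨_, rfl⟩ ⟨_, rfl⟩

theorem Om_pf4 [FiniteDimensional ℂ W] (hA : ∀ i j, A i j = - A j i) (κ : W → Module.Dual ℂ W)
    (hy : ∀ y, (2:ℂ) • ∑ j, (∑ i, A i j * κ y (e i)) • e j = - y) (m : ℕ)
    (hm : Module.finrank ℂ W = 2*(m+2)) (x y z t : W) :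
    ((m+2 : ℂ) * (m+1)) • (ExteriorAlgebra.ι ℂ x * (ExteriorAlgebra.ι ℂ y *
      (ExteriorAlgebra.ι ℂ z * (ExteriorAlgebra.ι ℂ t * Om e A ^ m))))
      = (κ y x * κ t z - κ z x * κ t y + κ t x * κ z y) • Om e A ^ (m+2) := by
  refine pf4 (Om e A) (Om_comm e A) κ (fun y c => Om_ctr e A hA _ y (hy y) c) m ?_ ?_ x y z t
  · intro x
    refine deg_zero (2*(m+2)+1) (by omega) _ ?_
    rw [pow_succ']
    exact Submodule.mul_mem_mul ⟨_, rfl⟩ (Om_mem e A _)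
  · intro x y z
    refine deg_zero (2*(m+1)+1+1+1) (by omega) _ ?_
    rw [pow_succ', pow_succ', pow_succ']
    exact Submodule.mul_mem_mul ⟨_, rfl⟩ (Submodule.mul_mem_mul ⟨_, rfl⟩
      (Submodule.mul_mem_mul ⟨_, rfl⟩ (Om_mem e A _)))
end Alg

section Int

/-- moment vector -/
def vv (K : ℕ) (z : ℂ) : Fin K → ℂ := fun i => z ^ (i : ℕ)

/-- two-form at a point -/
def om (K : ℕ) (z : ℂ) : ExteriorAlgebra ℂ (Fin K → ℂ) :=
  ExteriorAlgebra.ι ℂ (vv K z) * ExteriorAlgebra.ι ℂ (vv K ((starRingEnd ℂ) z))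

/-- standard basis -/
def ee (K : ℕ) (i : Fin K) : Fin K → ℂ := Pi.single i 1

theorem vv_sum (K : ℕ) (x : Fin K → ℂ) : x = ∑ i, x i • ee K i := by
  ext j; simp [ee, Finset.sum_apply, Pi.single_apply]

theorem om_sum (K : ℕ) (z : ℂ) : om K z = ∑ p : Fin K × Fin K,
    (z ^ (p.1 : ℕ) * (starRingEnd ℂ) z ^ (p.2 : ℕ)) •
      (ExteriorAlgebra.ι ℂ (ee K p.1) * ExteriorAlgebra.ι ℂ (ee K p.2)) := by
  rw [om, vv_sum K (vv K z), vv_sum K (vv K ((starRingEnd ℂ) z))]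
  simp only [map_sum, sum_mul, mul_sum, Fintype.sum_prod_type, map_smul, smul_mul_assoc,
    mul_smul_comm, vv]
  rw [sum_comm]
  refine sum_congr rfl fun i _ => ?_
  rw [smul_sum]
  refine sum_congr rfl fun j _ => ?_
  rw [smul_smul, mul_comm]

/-- the multilinear functional -/
def Psi (K m : ℕ) (φ : ExteriorAlgebra ℂ (Fin K → ℂ) →ₗ[ℂ] ℂ) (X : ExteriorAlgebra ℂ (Fin K → ℂ)) :
    MultilinearMap ℂ (fun _ : Fin m => ExteriorAlgebra ℂ (Fin K → ℂ)) ℂ :=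
  (φ ∘ₗ LinearMap.mulLeft ℂ X).compMultilinearMap (MultilinearMap.mkPiAlgebraFin ℂ m _)

theorem Psi_apply (K m : ℕ) (φ : ExteriorAlgebra ℂ (Fin K → ℂ) →ₗ[ℂ] ℂ)
    (X : ExteriorAlgebra ℂ (Fin K → ℂ)) (y : Fin m → ExteriorAlgebra ℂ (Fin K → ℂ)) :
    Psi K m φ X y = φ (X * (List.ofFn y).prod) := by
  simp [Psi]

theorem Psi_expand (K m : ℕ) (φ : ExteriorAlgebra ℂ (Fin K → ℂ) →ₗ[ℂ] ℂ)
    (X : ExteriorAlgebra ℂ (Fin K → ℂ)) (g : ℂ → ℂ) (ζs : Fin m → ℂ) :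
    (∏ j, g (ζs j)) * φ (X * (List.ofFn fun j => om K (ζs j)).prod) =
    ∑ r : Fin m → Fin K × Fin K, (∏ j, (g (ζs j) * (ζs j ^ ((r j).1 : ℕ) *
      (starRingEnd ℂ) (ζs j) ^ ((r j).2 : ℕ)))) *
      Psi K m φ X (fun j => ExteriorAlgebra.ι ℂ (ee K (r j).1) *
        ExteriorAlgebra.ι ℂ (ee K (r j).2)) := by
  rw [← Psi_apply]
  simp only [om_sum]
  rw [MultilinearMap.map_sum, mul_sum]
  refine sum_congr rfl fun r _ => ?_
  rw [MultilinearMap.map_smul_univ, smul_eq_mul]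
  simp only [prod_mul_distrib]
  ring

theorem int_int (K m : ℕ) (φ : ExteriorAlgebra ℂ (Fin K → ℂ) →ₗ[ℂ] ℂ)
    (X : ExteriorAlgebra ℂ (Fin K → ℂ)) (g : ℂ → ℂ)
    (hg : ∀ i j : Fin K, Integrable fun z : ℂ => g z * (z ^ (i:ℕ) * (starRingEnd ℂ) z ^ (j:ℕ))) :
    Integrable fun ζs : Fin m → ℂ =>
      (∏ j, g (ζs j)) * φ (X * (List.ofFn fun j => om K (ζs j)).prod) := by
  simp only [Psi_expand]
  refine integrable_finsetSum _ fun r _ => Integrable.mul_const ?_ _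
  exact Integrable.fintype_prod (f := fun (j : Fin m) (z : ℂ) => g z * (z ^ ((r j).1 : ℕ) *
      (starRingEnd ℂ) z ^ ((r j).2 : ℕ))) fun j => hg _ _

theorem int_val (K m : ℕ) (φ : ExteriorAlgebra ℂ (Fin K → ℂ) →ₗ[ℂ] ℂ)
    (X : ExteriorAlgebra ℂ (Fin K → ℂ)) (g : ℂ → ℂ)
    (hg : ∀ i j : Fin K, Integrable fun z : ℂ => g z * (z ^ (i:ℕ) * (starRingEnd ℂ) z ^ (j:ℕ)))
    (c : ℂ) (A : Fin K → Fin K → ℂ)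
    (hA : ∀ i j : Fin K, ∫ z : ℂ, g z * (z ^ (i:ℕ) * (starRingEnd ℂ) z ^ (j:ℕ)) = c * A i j) :
    ∫ ζs : Fin m → ℂ, (∏ j, g (ζs j)) * φ (X * (List.ofFn fun j => om K (ζs j)).prod)
      = c ^ m * φ (X * Om (ee K) A ^ m) := by
  simp only [Psi_expand]
  rw [integral_finsetSum]
  swap
  · refine fun r _ => Integrable.mul_const ?_ _
    exact Integrable.fintype_prod (f := fun (j : Fin m) (z : ℂ) => g z * (z ^ ((r j).1 : ℕ) *
      (starRingEnd ℂ) z ^ ((r j).2 : ℕ))) fun j => hg _ _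
  have : φ (X * Om (ee K) A ^ m) = Psi K m φ X (fun _ => Om (ee K) A) := by
    rw [Psi_apply]; simp
  rw [this]
  have h2 : Om (ee K) A = ∑ p : Fin K × Fin K, A p.1 p.2 •
      (ExteriorAlgebra.ι ℂ (ee K p.1) * ExteriorAlgebra.ι ℂ (ee K p.2)) := by
    rw [Om, Fintype.sum_prod_type]
  rw [h2, MultilinearMap.map_sum, mul_sum]
  refine sum_congr rfl fun r _ => ?_
  rw [integral_mul_const, MultilinearMap.map_smul_univ,
    integral_fintype_prod_volume_eq_prod (fun (j : Fin m) (z : ℂ) => g z * (z ^ ((r j).1 : ℕ) *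
      (starRingEnd ℂ) z ^ ((r j).2 : ℕ)))]
  simp only [hA, prod_mul_distrib, prod_const, card_univ, Fintype.card_fin, smul_eq_mul]
  ring

/-- flattened points -/
def flat : (m : ℕ) → (Fin m → ℂ) → Fin (2*m) → ℂ
  | 0, _ => fun _ => 0
  | m+1, ζs => Fin.cons (n := 2*m+1) (α := fun _ => ℂ) (ζs 0)
      (Fin.cons (n := 2*m) (α := fun _ => ℂ) ((starRingEnd ℂ) (ζs 0)) (flat m (Fin.tail ζs)))

theorem flat_prod (F : ℂ → ℂ) (m : ℕ) (ζs : Fin m → ℂ) :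
    ∏ i, F (flat m ζs i) = ∏ j, F (ζs j) * F ((starRingEnd ℂ) (ζs j)) := by
  induction m with
  | zero => simp
  | succ m ih =>
    change ∏ i : Fin (2*m+1+1), F (flat (m+1) ζs i) = _
    rw [Fin.prod_univ_succ (n := m), Fin.prod_univ_succ (n := 2*m+1), Fin.prod_univ_succ (n := 2*m)]
    simp only [flat, Fin.cons_zero, Fin.cons_succ]
    rw [ih, mul_assoc]; rfl

theorem flat_list (K m : ℕ) (ζs : Fin m → ℂ) :
    (List.ofFn fun i => ExteriorAlgebra.ι ℂ (vv K (flat m ζs i))).prod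
      = (List.ofFn fun j => om K (ζs j)).prod := by
  induction m with
  | zero => simp
  | succ m ih =>
    rw [List.ofFn_succ (n := m), List.ofFn_succ (n := 2*m+1), List.ofFn_succ (n := 2*m)]
    simp only [List.prod_cons, flat, Fin.cons_zero, Fin.cons_succ]
    rw [ih, ← mul_assoc]; rfl

theorem flat_vdm (m : ℕ) (ζs : Fin m → ℂ) :
    ∏ i, ∏ j ∈ Ioi i, (flat m ζs j - flat m ζs i) =
    (∏ j : Fin m, ∏ k ∈ Ioi j, ((‖ζs j - ζs k‖ ^ 2 * ‖ζs j - (starRingEnd ℂ) (ζs k)‖ ^ 2 : ℝ) : ℂ))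
      * ∏ j, ((starRingEnd ℂ) (ζs j) - ζs j) := by
  induction m with
  | zero => simp
  | succ m ih =>
    change ∏ i : Fin (2*m+1+1), ∏ j ∈ Ioi i, (flat (m+1) ζs j - flat (m+1) ζs i) = _
    rw [Fin.prod_univ_succ (n := m), Fin.prod_univ_succ (n := m),
      Fin.prod_univ_succ (n := 2*m+1), Fin.prod_univ_succ (n := 2*m)]
    have ih' := ih (Fin.tail ζs)
    simp only [Fin.prod_Ioi_zero, Fin.prod_Ioi_succ, flat, Fin.cons_zero, Fin.cons_succ]
    rw [Fin.prod_univ_succ (n := 2*m)]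
    simp only [Fin.prod_Ioi_zero, Fin.prod_Ioi_succ, flat, Fin.cons_zero, Fin.cons_succ]
    rw [ih', flat_prod (fun x => x - ζs 0), flat_prod (fun x => x - (starRingEnd ℂ) (ζs 0))]
    have : ∀ j : Fin m, ((‖ζs 0 - ζs j.succ‖ ^ 2 *
        ‖ζs 0 - (starRingEnd ℂ) (ζs j.succ)‖ ^ 2 : ℝ) : ℂ) =
        ((Fin.tail ζs j - ζs 0) * ((starRingEnd ℂ) (Fin.tail ζs j) - ζs 0)) *
        ((Fin.tail ζs j - (starRingEnd ℂ) (ζs 0)) *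
          ((starRingEnd ℂ) (Fin.tail ζs j) - (starRingEnd ℂ) (ζs 0))) := by
      intro j
      push_cast
      rw [← Complex.mul_conj', ← Complex.mul_conj']
      simp only [map_sub, Complex.conj_conj, Fin.tail]
      ring
    rw [prod_congr rfl fun j _ => this j, prod_mul_distrib]
    simp only [Fin.tail, prod_mul_distrib]
    ring

/-- the determinant functional -/
def phi (K : ℕ) : ExteriorAlgebra ℂ (Fin K → ℂ) →ₗ[ℂ] ℂ :=
  ExteriorAlgebra.liftAlternating (fun i => if h : i = K then
    h ▸ (Matrix.detRowAlternating : (Fin i → ℂ) [⋀^Fin i]→ₗ[ℂ] ℂ) else 0)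

theorem phi_apply (K : ℕ) (v : Fin K → Fin K → ℂ) :
    phi K (List.ofFn fun i => ExteriorAlgebra.ι ℂ (v i)).prod = Matrix.det (Matrix.of v) := by
  rw [← ExteriorAlgebra.ιMulti_apply, phi, ExteriorAlgebra.liftAlternating_apply_ιMulti]
  simp; rfl

theorem phi_om (m : ℕ) (ζs : Fin m → ℂ) :
    phi (2*m) (List.ofFn fun j => om (2*m) (ζs j)).prod =
    (∏ j : Fin m, ∏ k ∈ Ioi j, ((‖ζs j - ζs k‖ ^ 2 * ‖ζs j - (starRingEnd ℂ) (ζs k)‖ ^ 2 : ℝ) : ℂ))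
      * ∏ j, ((starRingEnd ℂ) (ζs j) - ζs j) := by
  rw [← flat_list, phi_apply, ← flat_vdm, ← Matrix.det_vandermonde]
  rfl

theorem jointDen_eq (m : ℕ) (n L : ℝ) (ζs : Fin m → ℂ) :
    ((jointDen m n L ζs : ℝ) : ℂ) =
    (∏ j, ((ζs j - (starRingEnd ℂ) (ζs j)) * (wfun n L (ζs j) : ℂ))) *
      phi (2*m) (List.ofFn fun j => om (2*m) (ζs j)).prod := by
  rw [phi_om, jointDen]
  have h : ∀ a b c : ℂ, b * c = a → ∀ P : ℂ, P * a = b * (P * c) := by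
    intro a b c h P; rw [← h]; ring
  push_cast
  refine h _ _ _ ?_ _
  rw [← prod_mul_distrib]
  refine Finset.prod_congr rfl fun j _ => ?_
  rw [← Complex.mul_conj']
  simp only [map_sub, Complex.conj_conj]
  ring

end Int

section Mom

theorem wfun_eq (n M : ℕ) (L : ℝ) (hM : 2*L = (M:ℝ)) (z : ℂ) :
    wfun n L z = ‖z‖ ^ (2*M) / (1 + ‖z‖^2) ^ (2*n+M+2) := by
  have h1 : (4*L) = ((2*M : ℕ) : ℝ) := by push_cast; linarith
  have h2 : (2*((n:ℝ)+L+1)) = ((2*n+M+2 : ℕ) : ℝ) := by push_cast; linarith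
  have h3 : 0 ≤ 1 + ‖z‖^2 := by positivity
  rw [wfun, h1, h2, Real.rpow_neg h3, Real.rpow_natCast, Real.rpow_natCast, div_eq_mul_inv]

theorem int_bound (k Q : ℕ) (h : k + 3 ≤ 2*Q) :
    Integrable fun z : ℂ => ‖z‖ ^ k / (1 + ‖z‖^2) ^ Q := by
  have h0 := integrable_rpow_neg_one_add_norm_sq (E := ℂ) (μ := volume) (r := 3) (by
    rw [Complex.finrank_real_complex]; norm_num)
  refine h0.mono' ?_ ?_
  · refine Continuous.aestronglyMeasurable ?_
    refine Continuous.div (by fun_prop) (by fun_prop) fun z => by positivity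
  · refine Eventually.of_forall fun z => ?_
    have hz : (0:ℝ) ≤ ‖z‖ := norm_nonneg z
    rw [Real.norm_of_nonneg (by positivity), div_le_iff₀ (by positivity)]
    have hp : (0:ℝ) < 1 + ‖z‖^2 := by positivity
    have h1 : ‖z‖ ^ k ≤ (1 + ‖z‖^2) ^ ((k:ℝ)/2) := by
      have : ‖z‖ ^ k = (‖z‖^2) ^ ((k:ℝ)/2) := by
        rw [← Real.rpow_natCast ‖z‖ 2, ← Real.rpow_mul hz, ← Real.rpow_natCast]
        congr 1; push_cast; ring
      rw [this]
      exact Real.rpow_le_rpow (by positivity) (by linarith) (by positivity)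
    refine h1.trans ?_
    rw [← Real.rpow_natCast (1 + ‖z‖^2) Q, ← Real.rpow_add hp]
    refine Real.rpow_le_rpow_of_exponent_le (by nlinarith) ?_
    have : (k:ℝ) + 3 ≤ 2 * Q := by exact_mod_cast h
    linarith

theorem radial_int (p r : ℕ) :
    IntegrableOn (fun y : ℝ => y ^ (2*p+1) / (1 + y^2) ^ (p+r+2)) (Set.Ioi 0) := by
  have h := int_bound (2*p) (p+r+2) (by omega)
  have := (integrable_fun_norm_addHaar (volume : Measure ℂ)
    (f := fun y : ℝ => y ^ (2*p) / (1 + y^2) ^ (p+r+2))).1 h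
  rw [Complex.finrank_real_complex] at this
  refine this.congr_fun (fun y _ => ?_) measurableSet_Ioi
  simp [pow_succ]; ring

theorem tend0 (p r : ℕ) : Tendsto (fun y : ℝ => y ^ (2*p) / (1 + y^2) ^ (p+r+1)) atTop (nhds 0) := by
  have h1 : Tendsto (fun y : ℝ => (y ^ 2)⁻¹) atTop (nhds 0) :=
    tendsto_inv_atTop_zero.comp (tendsto_pow_atTop (by norm_num))
  refine squeeze_zero' (g := fun y : ℝ => (y ^ 2)⁻¹) ?_ ?_ h1
  · exact Eventually.of_forall fun y => div_nonneg (by rw [pow_mul]; positivity) (by positivity)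
  · filter_upwards [eventually_gt_atTop 0] with y hy
    rw [div_le_iff₀ (by positivity), inv_mul_eq_div, le_div_iff₀ (by positivity), ← pow_add]
    calc y ^ (2*p+2) = (y^2)^(p+1) := by rw [← pow_mul]; congr 1
      _ ≤ (1+y^2)^(p+1) := by gcongr; linarith
      _ ≤ (1+y^2)^(p+r+1) := pow_le_pow_right₀ (by nlinarith) (by omega)

theorem hasd (p q : ℕ) (y : ℝ) : HasDerivAt (fun y : ℝ => y ^ (2*p+2) / (1 + y^2) ^ (q+1))
    ((2*p+2) * (y^(2*p+1) / (1+y^2)^(q+1)) - 2*(q+1) * (y^(2*p+3) / (1+y^2)^(q+2))) y := by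
  have hp : (1:ℝ) + y^2 ≠ 0 := by positivity
  have h1 : HasDerivAt (fun y : ℝ => (1 + y^2)) (2*y) y := by
    simpa using (hasDerivAt_pow 2 y).const_add 1
  have := (hasDerivAt_pow (2*p+2) y).div (h1.pow (q+1)) (pow_ne_zero _ hp)
  refine this.congr_deriv ?_
  simp only [Pi.pow_apply]
  push_cast
  field_simp
  ring

theorem radial_val (p r : ℕ) :
    ∫ y in Set.Ioi (0:ℝ), y ^ (2*p+1) / (1 + y^2) ^ (p+r+2) =
      (p.factorial * r.factorial : ℝ) / (2 * (p+r+1).factorial) := by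
  induction p with
  | zero =>
    have h1 : ∀ y ∈ Set.Ici (0:ℝ), HasDerivAt (fun y : ℝ => -(1/(2*(r+1))) * (1/(1+y^2)^(r+1)))
        (y ^ (2*0+1) / (1 + y^2) ^ (0+r+2)) y := by
      intro y _
      have hp : (1:ℝ) + y^2 ≠ 0 := by positivity
      have h1 : HasDerivAt (fun y : ℝ => (1 + y^2)) (2*y) y := by
        simpa using (hasDerivAt_pow 2 y).const_add 1
      have := (((hasDerivAt_const y (1:ℝ)).div (h1.pow (r+1)) (pow_ne_zero _ hp))).const_mul
        (-(1/(2*((r:ℝ)+1))))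
      refine this.congr_deriv ?_
      simp only [Pi.pow_apply]
      have : (r:ℝ)+1 ≠ 0 := by positivity
      push_cast
      field_simp
      ring
    have h2 := integral_Ioi_of_hasDerivAt_of_tendsto' h1 (radial_int 0 r) (m := 0) (by
      have := (tend0 0 r).const_mul (-(1/(2*((r:ℝ)+1))))
      simpa using this)
    rw [h2]
    have : (r:ℝ)+1 ≠ 0 := by positivity
    have : (r.factorial:ℝ) ≠ 0 := by positivity
    simp [Nat.factorial_succ]
    field_simp
  | succ p ih =>
    have i1 := (radial_int p r)
    have i2 := (radial_int (p+1) r)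
    have e2 : ∀ y : ℝ, y ^ (2*(p+1)+1) / (1 + y^2) ^ (p+1+r+2) =
      y ^ (2*p+3) / (1 + y^2) ^ (p+r+1+2) := by
      intro y; congr 2; omega
    simp only [e2] at i2 ⊢
    have h2 := integral_Ioi_of_hasDerivAt_of_tendsto' (a := 0) (fun y _ => hasd p (p+r+1) y)
      ((i1.const_mul (2*p+2)).sub (i2.const_mul (2*((p+r+1 : ℕ)+1)))) (m := 0) (by
      have := tend0 (p+1) r
      rw [show p+1+r+1 = p+r+1+1 by omega] at this
      exact this)
    rw [integral_sub (i1.const_mul _) (i2.const_mul _), integral_const_mul, integral_const_mul, ih] at h2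
    have e3 : (p+1+r+1).factorial = (p+r+2) * (p+r+1).factorial := by
      rw [show p+1+r+1 = (p+r+1)+1 by omega, Nat.factorial_succ]
    rw [e3, Nat.factorial_succ]
    push_cast at h2 ⊢
    simp at h2
    have e4 : ((p+r+1).factorial : ℝ) ≠ 0 := by positivity
    have e5 : (p:ℝ)+r+2 ≠ 0 := by positivity
    field_simp at h2 ⊢
    linarith

/-- monomial times weight -/
def mw (M Q a b : ℕ) (z : ℂ) : ℂ :=
  z ^ a * (starRingEnd ℂ) z ^ b * ((‖z‖ ^ (2*M) / (1 + ‖z‖^2) ^ Q : ℝ) : ℂ)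

theorem mw_int (M Q a b : ℕ) (h : a + b + 2*M + 3 ≤ 2*Q) : Integrable (mw M Q a b) := by
  refine (int_bound (a+b+2*M) Q h).mono' ?_ ?_
  · refine Continuous.aestronglyMeasurable ?_
    unfold mw
    refine Continuous.mul ?_ (Complex.continuous_ofReal.comp ?_)
    · exact (continuous_pow a).mul ((Complex.continuous_conj).pow b)
    · exact Continuous.div (by fun_prop) (by fun_prop) fun z => by positivity
  · refine Eventually.of_forall fun z => le_of_eq ?_
    rw [mw, norm_mul, norm_mul, norm_pow, norm_pow, RCLike.norm_conj, Complex.norm_real,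
      Real.norm_of_nonneg (by positivity)]
    rw [pow_add, pow_add]; ring

theorem mw_zero (M Q a b : ℕ) (hab : a ≠ b) : ∫ z, mw M Q a b z = 0 := by
  -- rotation by a unit complex number
  obtain ⟨c, hc, hc1⟩ : ∃ c : Circle, (c:ℂ)^a * (starRingEnd ℂ) (c:ℂ) ^ b ≠ 1 ∧ True := by
    refine ⟨Circle.exp 1, ?_, trivial⟩
    rw [Circle.coe_exp, ← Complex.exp_conj, ← Complex.exp_nat_mul, ← Complex.exp_nat_mul,
      ← Complex.exp_add]
    intro h
    rw [Complex.exp_eq_one_iff] at h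
    obtain ⟨k, hk⟩ := h
    have h1 : ((a:ℂ) - b) * Complex.I = (k * (2*Real.pi)) * Complex.I := by
      rw [show (k:ℂ) * (2*Real.pi) * Complex.I = k * (2 * Real.pi * Complex.I) by ring, ← hk]
      simp; ring
    have h2 := mul_right_cancel₀ Complex.I_ne_zero h1
    have h3 : (a:ℝ) - b = k * (2*Real.pi) := by exact_mod_cast h2
    have hk0 : k ≠ 0 := by
      rintro rfl
      simp at h3
      apply hab
      have : (a:ℝ) = b := by linarith
      exact_mod_cast this
    have := irrational_pi
    apply this
    refine ⟨((a:ℚ) - b) / (2*k), ?_⟩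
    push_cast
    have : (k:ℝ) ≠ 0 := by exact_mod_cast hk0
    field_simp
    linarith
  have h := (rotation c).toMeasurableEquiv.measurableEmbedding
  have key : ∫ z, mw M Q a b (rotation c z) = ∫ z, mw M Q a b z :=
    (LinearIsometryEquiv.measurePreserving (rotation c)).integral_comp h (mw M Q a b)
  have h2 : ∀ z, mw M Q a b (rotation c z) = ((c:ℂ)^a * (starRingEnd ℂ) (c:ℂ) ^ b) * mw M Q a b z := by
    intro z
    rw [mw, mw, LinearIsometryEquiv.norm_map, rotation_apply, map_mul, mul_pow, mul_pow]
    ring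
  simp only [h2] at key
  rw [integral_const_mul] at key
  have : ((c:ℂ)^a * (starRingEnd ℂ) (c:ℂ) ^ b - 1) * ∫ z, mw M Q a b z = 0 := by
    rw [sub_mul, key]; ring
  rcases mul_eq_zero.1 this with h | h
  · exact absurd (sub_eq_zero.1 h) hc
  · exact h

/-- moments -/
def hh (n M a : ℕ) : ℝ := ((a+M).factorial * (2*n-a).factorial : ℝ) / (2*n+M+1).factorial

theorem mw_diag (n M a : ℕ) (ha : a ≤ 2*n) :
    ∫ z, mw M (2*n+M+2) a a z = Real.pi * hh n M a := by
  have h1 : ∀ z, mw M (2*n+M+2) a a z =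
      ((fun y : ℝ => y ^ (2*(a+M)) / (1 + y^2) ^ ((a+M) + (2*n-a) + 2)) ‖z‖ : ℝ) := by
    intro z
    have : (2*n+M+2) = (a+M) + (2*n-a) + 2 := by omega
    rw [mw, ← mul_pow, Complex.mul_conj', ← this]
    push_cast
    rw [mul_add, pow_add, pow_mul ]
    ring
  simp only [h1]
  rw [integral_complex_ofReal, integral_fun_norm_addHaar (volume : Measure ℂ)
    (fun y : ℝ => y ^ (2*(a+M)) / (1 + y^2) ^ ((a+M) + (2*n-a) + 2)), Complex.finrank_real_complex]
  have h2 := radial_val (a+M) (2*n-a)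
  have h3 : ∫ y in Set.Ioi (0:ℝ), y ^ (2-1) • (y ^ (2*(a+M)) / (1 + y^2) ^ ((a+M) + (2*n-a) + 2))
      = ((a+M).factorial * (2*n-a).factorial : ℝ) / (2 * ((a+M)+(2*n-a)+1).factorial) := by
    rw [← h2]
    refine setIntegral_congr_fun measurableSet_Ioi fun y _ => ?_
    simp [pow_succ]; ring
  rw [h3, show (a+M)+(2*n-a)+1 = 2*n+M+1 by omega, hh]
  have h4 : (volume : Measure ℂ).real (Metric.ball 0 1) = Real.pi := by
    simp [Measure.real, Complex.volume_ball]
  rw [h4]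
  have e4 : ((2*n+M+1).factorial : ℝ) ≠ 0 := by positivity
  push_cast
  simp only [smul_eq_mul, nsmul_eq_mul]
  push_cast
  field_simp

/-- the complex one-point weight -/
def gg (n L : ℝ) (z : ℂ) : ℂ := (z - (starRingEnd ℂ) z) * (wfun n L z : ℂ)

/-- skew moments -/
def AA (n M : ℕ) (a b : ℕ) : ℂ :=
  if b = a+1 then (hh n M b : ℂ) else if a = b+1 then -(hh n M a : ℂ) else 0

theorem gg_eq (n M : ℕ) (L : ℝ) (hM : 2*L = (M:ℝ)) (a b : ℕ) (z : ℂ) :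
    gg n L z * (z ^ a * (starRingEnd ℂ) z ^ b) =
      mw M (2*n+M+2) (a+1) b z - mw M (2*n+M+2) a (b+1) z := by
  rw [gg, wfun_eq n M L hM, mw, mw, pow_succ, pow_succ]; ring

theorem gg_int (n M : ℕ) (L : ℝ) (hM : 2*L = (M:ℝ)) (a b : ℕ) (ha : a < 2*n) (hb : b < 2*n) :
    Integrable fun z : ℂ => gg n L z * (z ^ a * (starRingEnd ℂ) z ^ b) := by
  simp only [gg_eq n M L hM]
  exact (mw_int _ _ _ _ (by omega)).sub (mw_int _ _ _ _ (by omega))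

theorem gg_val (n M : ℕ) (L : ℝ) (hM : 2*L = (M:ℝ)) (a b : ℕ) (ha : a < 2*n) (hb : b < 2*n) :
    ∫ z : ℂ, gg n L z * (z ^ a * (starRingEnd ℂ) z ^ b) = Real.pi * AA n M a b := by
  simp only [gg_eq n M L hM]
  rw [integral_sub (mw_int _ _ _ _ (by omega)) (mw_int _ _ _ _ (by omega))]
  rw [AA]
  split_ifs with h1 h2
  · subst h1
    rw [mw_diag n M _ (by omega), mw_zero _ _ _ _ (by omega), sub_zero]
  · subst h2
    rw [mw_diag n M _ (by omega), mw_zero _ _ _ _ (by omega)]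
    ring
  · rw [mw_zero _ _ _ _ (by omega), mw_zero _ _ _ _ (by omega)]
    ring

end Mom

section Ker

/-- gamma weights -/
def gK (n : ℕ) (L : ℝ) (j : ℕ) : ℝ :=
  (Real.Gamma ((j:ℝ)/2+L+1) * Real.Gamma ((n:ℝ)-(j:ℝ)/2+1/2))⁻¹

/-- prefactor -/
def Kc (n M : ℕ) : ℝ := Real.pi * Real.Gamma (2*n+M+2) / 2^(2*n+M+1)

theorem hrec (n M : ℕ) (L : ℝ) (hL : 0 ≤ L) (hM : 2*L = (M:ℝ)) (i : ℕ) (hi : i + 1 < 2*n) :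
    hh n M (i+2) * gK n L (i+2) = hh n M (i+1) * gK n L i := by
  obtain ⟨s, hs⟩ : ∃ s, 2*n = i+2+s := ⟨2*n-(i+2), by omega⟩
  have hsr : 2*(n:ℝ) = i+2+s := by exact_mod_cast hs
  have e1 : 2*n-(i+2) = s := by omega
  have e2 : 2*n-(i+1) = s+1 := by omega
  have e3 : i+2+M = (i+1+M)+1 := by omega
  have p1 : 0 < (i:ℝ)/2+L+1 := by positivity
  have p2 : 0 < ((s:ℝ)+1)/2 := by positivity
  have g1 : Real.Gamma (((i+2:ℕ):ℝ)/2+L+1) = ((i:ℝ)/2+L+1) * Real.Gamma ((i:ℝ)/2+L+1) := by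
    rw [← Real.Gamma_add_one p1.ne']; congr 1; push_cast; ring
  have g2 : Real.Gamma ((n:ℝ)-(i:ℝ)/2+1/2) = (((s:ℝ)+1)/2) * Real.Gamma (((s:ℝ)+1)/2) := by
    rw [← Real.Gamma_add_one p2.ne']; congr 1; linarith
  have g3 : (n:ℝ)-((i+2:ℕ):ℝ)/2+1/2 = ((s:ℝ)+1)/2 := by push_cast; linarith
  have q1 := (Real.Gamma_pos_of_pos p1).ne'
  have q2 := (Real.Gamma_pos_of_pos p2).ne'
  rw [hh, hh, gK, gK, g1, g2, g3, e1, e2, e3, Nat.factorial_succ (i+1+M), Nat.factorial_succ s]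
  have q3 : ((2*n+M+1).factorial : ℝ) ≠ 0 := by positivity
  have q4 := p1.ne'
  have q5 : (s:ℝ)+1 ≠ 0 := by positivity
  have hL' : L = M/2 := by linarith
  have q6 : (i:ℝ)+M+2 ≠ 0 := by positivity
  have q7 : (i:ℝ)/2+L+1 = ((i:ℝ)+M+2)/2 := by rw [hL']; ring
  rw [mul_inv, mul_inv, mul_inv, mul_inv]
  have w1 : ((i+1+M+1 : ℕ) : ℝ) * ((i:ℝ)/2+L+1)⁻¹ = 2 := by
    rw [q7]; push_cast; rw [inv_div, mul_div_assoc']; rw [div_eq_iff q6]; ring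
  have w2 : ((s+1 : ℕ) : ℝ) * (((s:ℝ)+1)/2)⁻¹ = 2 := by
    push_cast; field_simp
  rw [Nat.cast_mul, Nat.cast_mul]
  calc _ = (((i+1+M+1 : ℕ) : ℝ) * ((i:ℝ)/2+L+1)⁻¹) * (((i+1+M).factorial * s.factorial : ℝ) /
        (2*n+M+1).factorial * (Real.Gamma ((i:ℝ)/2+L+1))⁻¹ * (Real.Gamma (((s:ℝ)+1)/2))⁻¹) := by
          ring
    _ = (((s+1 : ℕ) : ℝ) * (((s:ℝ)+1)/2)⁻¹) * (((i+1+M).factorial * s.factorial : ℝ) /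
        (2*n+M+1).factorial * (Real.Gamma ((i:ℝ)/2+L+1))⁻¹ * (Real.Gamma (((s:ℝ)+1)/2))⁻¹) := by
          rw [w1, w2]
    _ = _ := by ring

theorem hnorm (n M : ℕ) (L : ℝ) (hL : 0 ≤ L) (hM : 2*L = (M:ℝ)) (j : ℕ) (hj : j < 2*n) :
    2 * hh n M (j+1) * (Kc n M * (gK n L j * gK n L (j+1))) = 1 := by
  obtain ⟨s, hs⟩ : ∃ s, 2*n = j+1+s := ⟨2*n-(j+1), by omega⟩
  have hsr : 2*(n:ℝ) = j+1+s := by exact_mod_cast hs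
  have e1 : 2*n-(j+1) = s := by omega
  have d1 := Real.Gamma_mul_Gamma_add_half ((j:ℝ)/2+L+1)
  have d2 := Real.Gamma_mul_Gamma_add_half (((s:ℝ)+1)/2)
  have f1 : Real.Gamma (2*((j:ℝ)/2+L+1)) = (j+1+M).factorial := by
    rw [← Real.Gamma_nat_eq_factorial]; congr 1; push_cast; linarith
  have f2 : Real.Gamma (2*(((s:ℝ)+1)/2)) = s.factorial := by
    rw [← Real.Gamma_nat_eq_factorial]; congr 1; ring
  have f3 : Real.Gamma (2*(n:ℝ)+M+2) = (2*n+M+1).factorial := by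
    rw [← Real.Gamma_nat_eq_factorial]; congr 1; push_cast; ring
  rw [f1] at d1
  rw [f2] at d2
  have a1 : ((j+1:ℕ):ℝ)/2+L+1 = (j:ℝ)/2+L+1+1/2 := by push_cast; ring
  have a2 : (n:ℝ)-(j:ℝ)/2+1/2 = ((s:ℝ)+1)/2+1/2 := by linarith
  have a3 : (n:ℝ)-((j+1:ℕ):ℝ)/2+1/2 = ((s:ℝ)+1)/2 := by push_cast; linarith
  have key : gK n L j * gK n L (j+1) = ((j+1+M).factorial * s.factorial * Real.pi /
      2^(2*n+M))⁻¹ := by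
    rw [gK, gK, a1, a2, a3, ← mul_inv]
    congr 1
    have : (2:ℝ) ^ (1 - 2*((j:ℝ)/2+L+1)) * (2:ℝ) ^ (1 - 2*(((s:ℝ)+1)/2)) = (2^(2*n+M))⁻¹ := by
      rw [← Real.rpow_add (by norm_num), ← Real.rpow_natCast, ← Real.rpow_neg (by norm_num)]
      congr 1; push_cast; linarith
    calc _ = (Real.Gamma ((j:ℝ)/2+L+1) * Real.Gamma ((j:ℝ)/2+L+1+1/2)) *
          (Real.Gamma (((s:ℝ)+1)/2) * Real.Gamma (((s:ℝ)+1)/2+1/2)) := by ring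
      _ = (j+1+M).factorial * s.factorial * (√Real.pi * √Real.pi) *
        ((2:ℝ) ^ (1 - 2*((j:ℝ)/2+L+1)) * (2:ℝ) ^ (1 - 2*(((s:ℝ)+1)/2))) := by
          rw [d1, d2]; ring
      _ = _ := by rw [this, Real.mul_self_sqrt Real.pi_pos.le]; ring
  rw [key, hh, Kc, f3, e1]
  have := Real.pi_pos.ne'
  have q3 : ((2*n+M+1).factorial : ℝ) ≠ 0 := by positivity
  have q4 : ((j+1+M).factorial : ℝ) ≠ 0 := by positivity
  have q5 : (s.factorial : ℝ) ≠ 0 := by positivity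
  field_simp
  ring

/-- kernel coefficients -/
def CC (n M : ℕ) (L : ℝ) (a c : ℕ) : ℝ :=
  if a % 2 = 1 ∧ c % 2 = 0 ∧ c < a then Kc n M * (gK n L c * gK n L a)
  else if a % 2 = 0 ∧ c % 2 = 1 ∧ a < c then -(Kc n M * (gK n L a * gK n L c)) else 0

theorem AA_sum (n M K : ℕ) (a : ℕ) (ha : a < K) (f : ℕ → ℂ) :
    ∑ i ∈ range K, AA n M a i * f i =
      (if a + 1 < K then (hh n M (a+1) : ℂ) * f (a+1) else 0)
       - (if 0 < a then (hh n M a : ℂ) * f (a-1) else 0) := by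
  have h : ∀ i, AA n M a i * f i = (if i = a+1 then (hh n M (a+1) : ℂ) * f (a+1) else 0)
      - (if i = a-1 then (if 0 < a then (hh n M a : ℂ) * f (a-1) else 0) else 0) := by
    intro i
    rw [AA]
    rcases Nat.eq_zero_or_pos a with rfl | ha
    · by_cases h1 : i = 0+1
      · subst h1; simp
      · simp [h1]
    · by_cases h1 : i = a+1
      · subst h1
        rw [if_pos rfl, if_pos rfl, if_neg (show ¬ a+1 = a-1 by omega), sub_zero]
      · by_cases h2 : a = i+1
        · subst h2
          rw [if_neg h1, if_pos rfl, if_neg h1]; simp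
        · rw [if_neg h1, if_neg h2, if_neg h1, if_neg (by omega)]; simp
  simp only [h, sum_sub_distrib, sum_ite_eq', mem_range]
  congr 1
  rw [if_pos (by omega)]

theorem AC (n M N : ℕ) (L : ℝ) (hL : 0 ≤ L) (hM : 2*L = (M:ℝ)) (hn : N ≤ n) (a c : ℕ)
    (ha : a < 2*N) (hc : c < 2*N) :
    ∑ i ∈ range (2*N), AA n M a i * (CC n M L i c : ℂ) = if a = c then 1/2 else 0 := by
  rw [AA_sum n M _ a ha (fun i => (CC n M L i c : ℂ))]
  have h0 : (if a + 1 < 2*N then (hh n M (a+1) : ℂ) * (CC n M L (a+1) c : ℂ) else 0)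
      = ((hh n M (a+1) * CC n M L (a+1) c : ℝ) : ℂ) := by
    split_ifs with h
    · push_cast; rfl
    · have : CC n M L (a+1) c = 0 := by
        rw [CC, if_neg (by omega), if_neg (by omega)]
      rw [this]; simp
  have h1 : (if 0 < a then (hh n M a : ℂ) * (CC n M L (a-1) c : ℂ) else 0)
      = ((if 0 < a then hh n M a * CC n M L (a-1) c else 0 : ℝ) : ℂ) := by
    split_ifs <;> push_cast <;> rfl
  rw [h0, h1]
  have goal : hh n M (a+1) * CC n M L (a+1) c - (if 0 < a then hh n M a * CC n M L (a-1) c else 0)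
      = if a = c then 1/2 else 0 := by
    rcases Nat.eq_zero_or_pos a with rfl | hap
    · rw [if_neg (by omega), sub_zero, CC]
      by_cases hc0 : c = 0
      · subst hc0
        have := hnorm n M L hL hM 0 (by omega)
        simp at this ⊢
        linarith
      · rw [if_neg (by omega), if_neg (by omega), if_neg (by omega), mul_zero]
    · obtain ⟨b, rfl⟩ : ∃ b, a = b+1 := ⟨a-1, by omega⟩
      rw [if_pos hap, Nat.add_sub_cancel]
      have r := hrec n M L hL hM b (by omega)
      have r1 := hnorm n M L hL hM b (by omega)
      have r2 := hnorm n M L hL hM (b+1) (by omega)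
      rcases Nat.mod_two_eq_zero_or_one b with hb | hb <;>
        rcases Nat.mod_two_eq_zero_or_one c with hc2 | hc2
      · rw [CC, CC, if_neg (by omega), if_neg (by omega), if_neg (by omega), if_neg (by omega),
          if_neg (by omega)]; simp
      · rcases lt_trichotomy c (b+1) with h | h | h
        · rw [CC, CC, if_neg (by omega), if_neg (by omega), if_neg (by omega), if_neg (by omega),
            if_neg (by omega)]; simp
        · subst h
          rw [CC, CC, if_neg (by omega), if_neg (by omega), if_neg (by omega), if_pos (by omega),
            if_pos rfl]; linarith
        · rw [CC, CC, if_neg (by omega), if_pos (by omega), if_neg (by omega), if_pos (by omega),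
            if_neg (by omega)]
          linear_combination (- Kc n M * gK n L c) * r
      · rcases lt_trichotomy c (b+1) with h | h | h
        · rw [CC, CC, if_pos (by omega), if_pos (by omega), if_neg (by omega)]
          linear_combination (Kc n M * gK n L c) * r
        · subst h
          rw [CC, CC, if_pos (by omega), if_neg (by omega), if_neg (by omega),
            if_pos rfl]; linarith
        · rw [CC, CC, if_neg (by omega), if_neg (by omega), if_neg (by omega), if_neg (by omega),
            if_neg (by omega)]; simp
      · rw [CC, CC, if_neg (by omega), if_neg (by omega), if_neg (by omega), if_neg (by omega),
          if_neg (by omega)]; simp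
  rw [← Complex.ofReal_sub, goal]
  split_ifs <;> simp

/-- the kernel as a dual-valued map -/
def kap (n M : ℕ) (L : ℝ) (K : ℕ) (y : Fin K → ℂ) : Module.Dual ℂ (Fin K → ℂ) :=
  ∑ a : Fin K, (∑ c : Fin K, (CC n M L a c : ℂ) * y c) • LinearMap.proj a

theorem kap_apply (n M : ℕ) (L : ℝ) (K : ℕ) (x y : Fin K → ℂ) :
    kap n M L K y x = ∑ a : Fin K, (∑ c : Fin K, (CC n M L a c : ℂ) * y c) * x a := by
  simp [kap, LinearMap.sum_apply]

theorem AA_skew (n M a b : ℕ) : AA n M a b = - AA n M b a := by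
  simp only [AA]
  split_ifs <;> first | omega | simp

theorem kap_inv (n M N : ℕ) (L : ℝ) (hL : 0 ≤ L) (hM : 2*L = (M:ℝ)) (hn : N ≤ n)
    (y : Fin (2*N) → ℂ) :
    (2:ℂ) • ∑ j : Fin (2*N), (∑ i : Fin (2*N), AA n M (i:ℕ) (j:ℕ) *
      kap n M L (2*N) y (ee _ i)) • ee _ j = - y := by
  have h1 : ∀ i, kap n M L (2*N) y (ee _ i) = ∑ c : Fin (2*N), (CC n M L i c : ℂ) * y c := by
    intro i; rw [kap_apply]; simp [ee, Pi.single_apply]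
  have h2 : ∀ j : Fin (2*N), ∑ i : Fin (2*N), AA n M i j * kap n M L (2*N) y (ee _ i)
      = - (1/2) * y j := by
    intro j
    simp only [h1, mul_sum]
    rw [sum_comm]
    have : ∀ c : Fin (2*N), ∑ i : Fin (2*N), AA n M i j * ((CC n M L i c : ℂ) * y c) =
        - (if j = c then 1/2 else 0) * y c := by
      intro c
      have := AC n M N L hL hM hn j c j.2 c.2
      rw [← Fin.sum_univ_eq_sum_range (fun i => AA n M j i * (CC n M L i c : ℂ))] at this
      simp only [Fin.val_inj] at this
      rw [← this, ← sum_neg_distrib, sum_mul]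
      refine sum_congr rfl fun i _ => ?_
      rw [AA_skew]; ring
    rw [sum_congr rfl fun c _ => this c]
    simp
  simp only [h2]
  conv_rhs => rw [vv_sum _ y]
  rw [smul_sum, ← sum_neg_distrib]
  refine sum_congr rfl fun j _ => ?_
  rw [smul_smul, ← neg_smul]; congr 1; ring

theorem sum_even_odd (N : ℕ) (f : ℕ → ℂ) :
    ∑ a ∈ range (2*N), f a = ∑ k ∈ range N, (f (2*k) + f (2*k+1)) := by
  induction N with
  | zero => simp
  | succ N ih =>
    rw [show 2*(N+1) = 2*N+1+1 by ring, sum_range_succ, sum_range_succ, ih, sum_range_succ]; ring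

theorem kap_vv (n M N : ℕ) (L : ℝ) (ζ η : ℂ) :
    kap n M L (2*N) (vv _ η) (vv _ ζ) = ∑ k ∈ range N, ∑ l ∈ range (k+1),
      ((Kc n M * (gK n L (2*l) * gK n L (2*k+1)) : ℝ) : ℂ) *
        (ζ ^ (2*k+1) * η ^ (2*l) - η ^ (2*k+1) * ζ ^ (2*l)) := by
  rw [kap_apply]
  simp only [vv]
  rw [Fin.sum_univ_eq_sum_range (fun a => (∑ c : Fin (2*N), (CC n M L a c : ℂ) * η ^ (c:ℕ)) * ζ ^ a)]
  have h : ∀ a : ℕ, ∑ c : Fin (2*N), (CC n M L a c : ℂ) * η ^ (c:ℕ) =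
      ∑ c ∈ range (2*N), (CC n M L a c : ℂ) * η ^ c := fun a =>
    Fin.sum_univ_eq_sum_range (fun c => (CC n M L a c : ℂ) * η ^ c) _
  simp only [h]
  rw [sum_even_odd]
  simp only [sum_even_odd]
  set X : ℕ → ℕ → ℂ := fun k l => ((Kc n M * (gK n L (2*l) * gK n L (2*k+1)) : ℝ) : ℂ) with hX
  have c1 : ∀ k l, CC n M L (2*k) (2*l) = 0 := by
    intro k l; rw [CC, if_neg (by omega), if_neg (by omega)]
  have c2 : ∀ k l, CC n M L (2*k+1) (2*l+1) = 0 := by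
    intro k l; rw [CC, if_neg (by omega), if_neg (by omega)]
  have c3 : ∀ k l, (CC n M L (2*k+1) (2*l) : ℂ) = if l < k+1 then X k l else 0 := by
    intro k l
    rw [CC]
    by_cases h : l < k+1
    · rw [if_pos (by omega), if_pos h]
    · rw [if_neg (by omega), if_neg (by omega), if_neg h]; simp
  have c4 : ∀ k l, (CC n M L (2*k) (2*l+1) : ℂ) = if k < l+1 then - X l k else 0 := by
    intro k l
    rw [CC, if_neg (by omega)]
    by_cases h : k < l+1
    · rw [if_pos (by omega), if_pos h, hX]; push_cast; ring
    · rw [if_neg (by omega), if_neg h]; simp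
  simp only [c1, c2, c3, c4, Complex.ofReal_zero, zero_mul, zero_add, add_zero]
  rw [sum_add_distrib]
  simp only [sum_mul]
  rw [sum_comm, ← sum_add_distrib]
  refine sum_congr rfl fun k hk => ?_
  rw [← sum_add_distrib]
  have hk' := mem_range.1 hk
  rw [← sum_subset (range_subset_range.2 (show k+1 ≤ N by omega))]
  · refine sum_congr rfl fun l hl => ?_
    rw [if_pos (mem_range.1 hl), if_pos (mem_range.1 hl)]; ring
  · intro l _ hl
    rw [if_neg (by simpa using hl), if_neg (by simpa using hl)]; simp

theorem GK_eq (n M N : ℕ) (L : ℝ) (hM : 2*L = (M:ℝ)) (ζ η : ℂ) :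
    GK N n L ζ η = ζ^M * η^M * ∑ k ∈ range N, ∑ l ∈ range (k+1),
      ((Kc n M * (gK n L (2*l) * gK n L (2*k+1)) : ℝ) : ℂ) * (ζ ^ (2*k+1) * η ^ (2*l)) := by
  rw [GK]
  simp only [mul_sum]
  refine sum_congr rfl fun k _ => sum_congr rfl fun l _ => ?_
  have e1 : ((2*k+2*L+1 : ℝ) : ℂ) = ((M + (2*k+1) : ℕ) : ℂ) := by rw [hM]; push_cast; ring
  have e2 : ((2*l+2*L : ℝ) : ℂ) = ((M + 2*l : ℕ) : ℂ) := by rw [hM]; push_cast; ring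
  have e3 : ((2*n+2*L+1 : ℝ) : ℂ) = ((2*n+M+1 : ℕ) : ℂ) := by rw [hM]; push_cast; ring
  have e4 : (2*(n:ℝ)+2*L+2 : ℝ) = 2*n+M+2 := by rw [hM]
  rw [e1, e2, e3, e4, Complex.cpow_natCast, Complex.cpow_natCast, Complex.cpow_natCast]
  simp only [Complex.Gamma_ofReal]
  rw [Kc, gK, gK]
  have a1 : (((2*l:ℕ):ℝ)/2+L+1) = l+L+1 := by push_cast; ring
  have a2 : ((n:ℝ)-((2*l:ℕ):ℝ)/2+1/2) = n-l+1/2 := by push_cast; ring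
  have a3 : (((2*k+1:ℕ):ℝ)/2+L+1) = k+L+3/2 := by push_cast; ring
  have a4 : ((n:ℝ)-((2*k+1:ℕ):ℝ)/2+1/2) = n-k := by push_cast; ring
  rw [a1, a2, a3, a4]
  generalize Real.Gamma (l+L+1) = G1
  generalize Real.Gamma (n-l+1/2) = G2
  generalize Real.Gamma (k+L+3/2) = G3
  generalize Real.Gamma ((n:ℝ)-k) = G4
  generalize Real.Gamma _ = G5
  push_cast
  rw [pow_add ζ, pow_add η, div_eq_mul_inv, div_eq_mul_inv]
  simp only [mul_inv]
  ring

theorem KK_eq (n M N : ℕ) (L : ℝ) (hM : 2*L = (M:ℝ)) (ζ η : ℂ) :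
    KK N n L ζ η = ζ^M * η^M * kap n M L (2*N) (vv _ η) (vv _ ζ) := by
  rw [KK, GK_eq n M N L hM, GK_eq n M N L hM, kap_vv, mul_comm (η^M), ← mul_sub, ← sum_sub_distrib]
  congr 1
  refine sum_congr rfl fun k _ => ?_
  rw [← sum_sub_distrib]
  refine sum_congr rfl fun l _ => ?_
  ring

theorem kap_conj (n M N : ℕ) (L : ℝ) (ζ η : ℂ) :
    kap n M L (2*N) (vv _ ((starRingEnd ℂ) η)) (vv _ ((starRingEnd ℂ) ζ)) =
    (starRingEnd ℂ) (kap n M L (2*N) (vv _ η) (vv _ ζ)) := by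
  rw [kap_vv, kap_vv]
  simp only [map_sum, map_mul, map_sub, map_pow, Complex.conj_ofReal]

end Ker

section Fin

theorem jd_cont (N n M : ℕ) (L : ℝ) (hM : 2*L = (M:ℝ)) : Continuous (jointDen N n L) := by
  unfold jointDen
  have hw : Continuous fun z : ℂ => wfun n L z := by
    simp only [wfun_eq n M L hM]
    exact Continuous.div (by fun_prop) (by fun_prop) fun z => by positivity
  have hc := Complex.continuous_conj
  refine Continuous.mul ?_ ?_
  · refine continuous_finsetProd _ fun j _ => continuous_finsetProd _ fun k _ => ?_
    refine Continuous.mul (by fun_prop) ?_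
    exact ((((continuous_apply j).sub (hc.comp (continuous_apply k)))).norm).pow 2
  · refine continuous_finsetProd _ fun j _ => ?_
    refine Continuous.mul ?_ (hw.comp (continuous_apply j))
    exact ((((continuous_apply j).sub (hc.comp (continuous_apply j)))).norm).pow 2

theorem wfun_nonneg (n L : ℝ) (z : ℂ) : 0 ≤ wfun n L z := by unfold wfun; positivity

theorem jd_nonneg (N : ℕ) (n L : ℝ) (ζs : Fin N → ℂ) : 0 ≤ jointDen N n L ζs := by
  unfold jointDen
  refine mul_nonneg (prod_nonneg fun j _ => prod_nonneg fun k _ => by positivity)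
    (prod_nonneg fun j _ => mul_nonneg (by positivity) (wfun_nonneg _ _ _))

theorem gInt (N n M : ℕ) (L : ℝ) (hM : 2*L = (M:ℝ)) (hn : N ≤ n) (i j : Fin (2*N)) :
    Integrable fun z : ℂ => gg n L z * (z ^ (i:ℕ) * (starRingEnd ℂ) z ^ (j:ℕ)) :=
  gg_int n M L hM i j (by omega) (by omega)

theorem gVal (N n M : ℕ) (L : ℝ) (hM : 2*L = (M:ℝ)) (hn : N ≤ n) (i j : Fin (2*N)) :
    ∫ z : ℂ, gg n L z * (z ^ (i:ℕ) * (starRingEnd ℂ) z ^ (j:ℕ)) =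
      (Real.pi : ℂ) * (fun i j : Fin (2*N) => AA n M (i:ℕ) (j:ℕ)) i j :=
  gg_val n M L hM i j (by omega) (by omega)

theorem jd_eq1 (N : ℕ) (n L : ℝ) (ζs : Fin N → ℂ) : ((jointDen N n L ζs : ℝ) : ℂ) =
    (∏ j, gg n L (ζs j)) * phi (2*N) (1 * (List.ofFn fun j => om (2*N) (ζs j)).prod) := by
  rw [one_mul, jointDen_eq]; rfl

theorem jd_int (N n M : ℕ) (L : ℝ) (hM : 2*L = (M:ℝ)) (hn : N ≤ n) :
    Integrable (jointDen N n L) := by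
  have h := int_int (2*N) N (phi (2*N)) 1 (gg n L) (gInt N n M L hM hn)
  simp only [← jd_eq1] at h
  exact h.re

theorem ZN_eq (N n M : ℕ) (L : ℝ) (hM : 2*L = (M:ℝ)) (hn : N ≤ n) : ((ZN N n L : ℝ) : ℂ) =
    phi (2*N) (Om (ee (2*N)) (fun i j => AA n M (i:ℕ) (j:ℕ)) ^ N) := by
  have h := int_val (2*N) N (phi (2*N)) 1 (gg n L) (gInt N n M L hM hn) _ _ (gVal N n M L hM hn)
  simp only [← jd_eq1] at h
  rw [integral_complex_ofReal, one_mul] at h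
  rw [ZN, Complex.ofReal_mul, h, ← mul_assoc]
  have : (Real.pi : ℂ) ≠ 0 := by exact_mod_cast Real.pi_pos.ne'
  push_cast
  rw [← mul_pow, inv_mul_cancel₀ this, one_pow, one_mul]

theorem ZN_pos (N n M : ℕ) (L : ℝ) (hM : 2*L = (M:ℝ)) (hn : N ≤ n) : 0 < ZN N n L := by
  have hp := Real.pi_pos
  refine mul_pos (by positivity) ?_
  rw [integral_pos_iff_support_of_nonneg (jd_nonneg N n L) (jd_int N n M L hM hn)]
  refine IsOpen.measure_pos _ (jd_cont N n M L hM).isOpen_support ?_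
  refine ⟨fun j => ((j:ℕ)+1 : ℝ) * Complex.I, ?_⟩
  rw [Function.mem_support]
  have im1 : ∀ x : ℝ, (((x:ℂ)+1) * Complex.I).im = x+1 := by intro x; simp
  have hne : ∀ x y : ℝ, 0 ≤ x → 0 ≤ y →
      ((x+1 : ℝ):ℂ) * Complex.I - (starRingEnd ℂ) (((y+1 : ℝ):ℂ) * Complex.I) ≠ 0 := by
    intro x y hx hy h
    have := congrArg Complex.im h
    simp at this
    linarith
  have hne2 : ∀ x y : ℝ, x ≠ y →
      ((x+1 : ℝ):ℂ) * Complex.I - ((y+1 : ℝ):ℂ) * Complex.I ≠ 0 := by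
    intro x y hx h
    have := congrArg Complex.im h
    simp at this
    exact hx (by linarith)
  unfold jointDen
  refine mul_ne_zero (prod_ne_zero_iff.2 fun j _ => prod_ne_zero_iff.2 fun k hk => ?_)
    (prod_ne_zero_iff.2 fun j _ => ?_)
  · refine mul_ne_zero (pow_ne_zero _ (norm_ne_zero_iff.2 ?_)) (pow_ne_zero _ (norm_ne_zero_iff.2 ?_))
    · refine hne2 _ _ ?_
      have := (Finset.mem_Ioi.1 hk).ne
      intro h
      exact this (Fin.ext (by exact_mod_cast h))
    · exact hne _ _ (by positivity) (by positivity)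
  · refine mul_ne_zero (pow_ne_zero _ (norm_ne_zero_iff.2 ?_)) ?_
    · exact hne _ _ (by positivity) (by positivity)
    · rw [wfun_eq n M L hM]
      refine div_ne_zero (pow_ne_zero _ (norm_ne_zero_iff.2 ?_)) (by positivity)
      refine mul_ne_zero ?_ Complex.I_ne_zero
      have : ((j:ℕ):ℝ)+1 ≠ 0 := by positivity
      exact_mod_cast this

theorem jd_eq2 (m : ℕ) (n L : ℝ) (ζ η : ℂ) (ζs : Fin m → ℂ) :
    ((jointDen (m+1+1) n L (Fin.cons ζ (Fin.cons η ζs)) : ℝ) : ℂ) =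
    gg n L ζ * gg n L η * ((∏ j, gg n L (ζs j)) * phi (2*(m+2)) (om _ ζ * om _ η *
      (List.ofFn fun j => om (2*(m+2)) (ζs j)).prod)) := by
  rw [jd_eq1, one_mul, Fin.prod_univ_succ, Fin.prod_univ_succ, List.ofFn_succ, List.ofFn_succ]
  simp only [List.prod_cons, Fin.cons_zero, Fin.cons_succ]
  rw [mul_assoc (om _ ζ)]
  ring

theorem R2_eq (m n M : ℕ) (L : ℝ) (hL : 0 ≤ L) (hM : 2*L = (M:ℝ)) (hn : m+2 ≤ n) (ζ η : ℂ) :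
    ((R2 (m+2) n L ζ η : ℝ) : ℂ) = gg n L ζ * gg n L η *
      (kap n M L (2*(m+2)) (vv _ ((starRingEnd ℂ) ζ)) (vv _ ζ) *
        kap n M L (2*(m+2)) (vv _ ((starRingEnd ℂ) η)) (vv _ η)
       - kap n M L (2*(m+2)) (vv _ η) (vv _ ζ) *
        kap n M L (2*(m+2)) (vv _ ((starRingEnd ℂ) η)) (vv _ ((starRingEnd ℂ) ζ))
       + kap n M L (2*(m+2)) (vv _ ((starRingEnd ℂ) η)) (vv _ ζ) *
        kap n M L (2*(m+2)) (vv _ η) (vv _ ((starRingEnd ℂ) ζ))) := by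
  have hZ := ZN_eq (m+2) n M L hM hn
  have hZ0 : ((ZN (m+2) n L : ℝ) : ℂ) ≠ 0 := by exact_mod_cast (ZN_pos (m+2) n M L hM hn).ne'
  have h := int_val (2*(m+2)) m (phi (2*(m+2))) (om _ ζ * om _ η) (gg n L)
    (gInt (m+2) n M L hM hn) _ _ (gVal (m+2) n M L hM hn)
  have hi : ((∫ ζs : Fin m → ℂ, jointDen (m+1+1) n L (Fin.cons ζ (Fin.cons η ζs)) : ℝ) : ℂ) =
      gg n L ζ * gg n L η * ((Real.pi:ℂ)^m * phi (2*(m+2)) (om _ ζ * om _ η *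
        Om (ee (2*(m+2))) (fun i j => AA n M (i:ℕ) (j:ℕ)) ^ m)) := by
    rw [← h, ← integral_const_mul, ← integral_complex_ofReal]
    refine integral_congr_ae (Eventually.of_forall fun ζs => ?_)
    exact jd_eq2 m n L ζ η ζs
  have hp := Om_pf4 (ee (2*(m+2))) (fun i j => AA n M (i:ℕ) (j:ℕ))
    (fun i j => AA_skew n M i j) (kap n M L (2*(m+2))) (kap_inv n M (m+2) L hL hM hn) m
    (by simp) (vv _ ζ) (vv _ ((starRingEnd ℂ) ζ)) (vv _ η) (vv _ ((starRingEnd ℂ) η))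
  have hp2 := congrArg (phi (2*(m+2))) hp
  rw [map_smul, map_smul, ← hZ, smul_eq_mul, smul_eq_mul] at hp2
  have hX : om (2*(m+2)) ζ * om _ η * Om (ee (2*(m+2))) (fun i j => AA n M (i:ℕ) (j:ℕ)) ^ m =
      ExteriorAlgebra.ι ℂ (vv _ ζ) * (ExteriorAlgebra.ι ℂ (vv _ ((starRingEnd ℂ) ζ)) *
      (ExteriorAlgebra.ι ℂ (vv _ η) * (ExteriorAlgebra.ι ℂ (vv _ ((starRingEnd ℂ) η)) *
       Om (ee (2*(m+2))) (fun i j => AA n M (i:ℕ) (j:ℕ)) ^ m))) := by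
    simp only [om, mul_assoc]
  rw [hX] at hi
  have hR : R2 (m+2) n L ζ η = (((m+2:ℕ):ℝ) * (((m+2:ℕ):ℝ)-1)) * (ZN (m+2) n L)⁻¹ *
    (Real.pi)⁻¹ ^ m * ∫ ζs : Fin m → ℂ, jointDen (m+1+1) n L (Fin.cons ζ (Fin.cons η ζs)) := rfl
  rw [hR]
  have hpi : (Real.pi : ℂ) ≠ 0 := by exact_mod_cast Real.pi_pos.ne'
  rw [Complex.ofReal_mul, hi]
  generalize phi _ _ = P at hp2 ⊢
  generalize (kap n M L _ _ _ * kap n M L _ _ _ - kap n M L _ _ _ * kap n M L _ _ _ +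
    kap n M L _ _ _ * kap n M L _ _ _) = S at hp2 ⊢
  push_cast
  have hpm : ((Real.pi:ℂ)⁻¹)^m * (Real.pi:ℂ)^m = 1 := by
    rw [← mul_pow, inv_mul_cancel₀ hpi, one_pow]
  calc _ = (ZN (m+2) n L : ℂ)⁻¹ * (((Real.pi:ℂ)⁻¹)^m * (Real.pi:ℂ)^m) * (gg n L ζ * gg n L η) *
        (((m:ℂ)+2) * (m+1) * P) := by ring
    _ = gg n L ζ * gg n L η * S := by
      rw [hp2, hpm]; field_simp

theorem two_point_aux (N n M : ℕ) (L : ℝ) (hN : 2 ≤ N) (hn : N ≤ n)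
    (hL : 0 ≤ L) (hM : 2*L = (M : ℝ)) (ζ η : ℂ) :
    (R2 N n L ζ η : ℂ) =
      ((starRingEnd ℂ) ζ - ζ) * ((starRingEnd ℂ) η - η) /
        ((((1 + ‖ζ‖ ^ 2) * (1 + ‖η‖ ^ 2)) ^ (2*(n:ℝ)+2*L+2) : ℝ) : ℂ) *
      (KK N n L ζ ((starRingEnd ℂ) ζ) * KK N n L η ((starRingEnd ℂ) η)
        - ((‖KK N n L ζ η‖ ^ 2 : ℝ) : ℂ)
        + ((‖KK N n L ζ ((starRingEnd ℂ) η)‖ ^ 2 : ℝ) : ℂ)) := by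
  obtain ⟨m, rfl⟩ : ∃ m, N = m+2 := ⟨N-2, by omega⟩
  rw [R2_eq m n M L hL hM hn]
  have k2 : kap n M L (2*(m+2)) (vv _ η) (vv _ ((starRingEnd ℂ) ζ)) =
      (starRingEnd ℂ) (kap n M L (2*(m+2)) (vv _ ((starRingEnd ℂ) η)) (vv _ ζ)) := by
    rw [← kap_conj, Complex.conj_conj]
  rw [k2, kap_conj n M (m+2) L ζ η]
  have e1 : (2*(n:ℝ)+2*L+2) = ((2*n+M+2 : ℕ) : ℝ) := by rw [hM]; push_cast; ring
  rw [e1, Real.rpow_natCast]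
  simp only [Complex.ofReal_pow, ← Complex.mul_conj']
  simp only [KK_eq n M (m+2) L hM, gg, wfun_eq n M L hM, map_mul, map_pow, Complex.conj_conj]
  generalize kap n M L (2*(m+2)) (vv _ η) (vv _ ζ) = a
  generalize kap n M L (2*(m+2)) (vv _ ((starRingEnd ℂ) η)) (vv _ ζ) = b
  generalize kap n M L (2*(m+2)) (vv _ ((starRingEnd ℂ) ζ)) (vv _ ζ) = c
  generalize kap n M L (2*(m+2)) (vv _ ((starRingEnd ℂ) η)) (vv _ η) = d
  have hz : ∀ z : ℂ, ((‖z‖ ^ (2*M) / (1 + ‖z‖^2) ^ (2*n+M+2) : ℝ) : ℂ) =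
      z^M * (starRingEnd ℂ) z ^ M * (((1 + ‖z‖^2 : ℝ) : ℂ) ^ (2*n+M+2))⁻¹ := by
    intro z
    rw [← mul_pow, Complex.mul_conj']
    push_cast
    rw [pow_mul, div_eq_mul_inv]
  rw [hz, hz, Complex.ofReal_mul, mul_pow, div_eq_mul_inv, mul_inv]
  ring

end Fin

/-- Proposition 1.1(a), k = 2: the two-point correlation function of the
symplectic induced spherical ensemble. -/
theorem two_point_correlation (N n M : ℕ) (L : ℝ) (hN : 2 ≤ N) (hn : N ≤ n)
    (hL : 0 ≤ L) (hM : 2*L = (M : ℝ)) (ζ η : ℂ) :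
    (R2 N n L ζ η : ℂ) =
      ((starRingEnd ℂ) ζ - ζ) * ((starRingEnd ℂ) η - η) /
        ((((1 + ‖ζ‖ ^ 2) * (1 + ‖η‖ ^ 2)) ^ (2*(n:ℝ)+2*L+2) : ℝ) : ℂ) *
      (KK N n L ζ ((starRingEnd ℂ) ζ) * KK N n L η ((starRingEnd ℂ) η)
        - ((‖KK N n L ζ η‖ ^ 2 : ℝ) : ℂ)
        + ((‖KK N n L ζ ((starRingEnd ℂ) η)‖ ^ 2 : ℝ) : ℂ)) := by
  exact two_point_aux N n M L hN hn hL hM ζ η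

end SI
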